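/- arXiv:2311.02295 — 2 statements merged into one kernel-verified Lean document; each statement's English description precedes it below -/
import Mathlib

section
/- Let s be a nonzero purely imaginary complex number and set t_n = (n + 1/2 + s)/(n + 1/2 − s) for n ∈ ℤ (so |t_n| = 1 for all n). Then the bounded block-shift operator T = T(t_n, 1) on H ⊕ H (i.e. with d_n = 1 for all n) is irreducible. -/
noncomputable section

open Complex Metric

/-- `ℓ²(ℤ)` over `ℂ`. -/
abbrev Hl : Type := lp (fun _ : ℤ => ℂ) 2

/-- The standard orthonormal basis of `ℓ²(ℤ)`. -/
def eb (n : ℤ) : Hl := lp.single 2 n 1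

/-- The Hilbert space direct sum `H ⊕ H`. -/
abbrev H2 : Type := WithLp 2 (Hl × Hl)

/-- A bounded operator on a Hilbert space is irreducible if the only closed subspaces
invariant under both it and its adjoint are `⊥` and `⊤`. -/
def IsIrreducibleOp {E : Type*} [NormedAddCommGroup E] [InnerProductSpace ℂ E] [CompleteSpace E]
    (A : E →L[ℂ] E) : Prop :=
  ∀ K : Submodule ℂ E, IsClosed (K : Set E) →
    (∀ x ∈ K, A x ∈ K) → (∀ x ∈ K, ContinuousLinearMap.adjoint A x ∈ K) →
    K = ⊥ ∨ K = ⊤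

/-- The block operator `(x, y) ↦ (T₀ x + (X T₁ − T₀ X) y, T₁ y)` on the Hilbert space
direct sum `H₀ ⊕ H₁`. -/
def blockT2 {H0 H1 : Type*} [NormedAddCommGroup H0] [NormedSpace ℂ H0]
    [NormedAddCommGroup H1] [NormedSpace ℂ H1]
    (T0 : H0 →L[ℂ] H0) (T1 : H1 →L[ℂ] H1) (X : H1 →L[ℂ] H0) :
    WithLp 2 (H0 × H1) →L[ℂ] WithLp 2 (H0 × H1) :=
  let E := WithLp.prodContinuousLinearEquiv 2 ℂ H0 H1
  (E.symm.toContinuousLinearMap).comp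
    ((((T0.comp (ContinuousLinearMap.fst ℂ H0 H1)) +
        ((X.comp T1 - T0.comp X).comp (ContinuousLinearMap.snd ℂ H0 H1))).prod
      (T1.comp (ContinuousLinearMap.snd ℂ H0 H1))).comp E.toContinuousLinearMap)

/-- The block operator `T(wₙ, vₙ, dₙ)` on `ℓ²(ℤ) ⊕ ℓ²(ℤ)`. -/
def blockT (T0 T1 X : Hl →L[ℂ] Hl) : H2 →L[ℂ] H2 := blockT2 T0 T1 X
/-- basis vector in the first summand -/
def av (n : ℤ) : H2 := WithLp.toLp 2 (eb n, 0)
/-- basis vector in the second summand -/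
def bv (n : ℤ) : H2 := WithLp.toLp 2 (0, eb n)

lemma eb_apply (n m : ℤ) : (eb n : ℤ → ℂ) m = if m = n then 1 else 0 := by
  simp [eb, Pi.single_apply]

lemma inner_av (n : ℤ) (v : H2) : inner ℂ (av n) v = v.fst n := by
  simp [av, eb, WithLp.prod_inner_apply, lp.inner_single_left]

lemma inner_bv (n : ℤ) (v : H2) : inner ℂ (bv n) v = v.snd n := by
  simp [bv, eb, WithLp.prod_inner_apply, lp.inner_single_left]

lemma H2_ext (v w : H2) (h1 : ∀ n, inner ℂ (av n) v = inner ℂ (av n) w)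
    (h2 : ∀ n, inner ℂ (bv n) v = inner ℂ (bv n) w) : v = w := by
  apply WithLp.ofLp_injective
  apply Prod.ext
  · apply lp.ext
    funext n
    have := h1 n
    rw [inner_av, inner_av] at this
    exact this
  · apply lp.ext
    funext n
    have := h2 n
    rw [inner_bv, inner_bv] at this
    exact this

lemma inner_aa (m n : ℤ) : inner ℂ (av m) (av n) = if m = n then (1 : ℂ) else 0 := by
  rw [inner_av]; exact eb_apply n m
lemma inner_bb (m n : ℤ) : inner ℂ (bv m) (bv n) = if m = n then (1 : ℂ) else 0 := by
  rw [inner_bv]; exact eb_apply n m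
lemma inner_ab (m n : ℤ) : inner ℂ (av m) (bv n) = (0 : ℂ) := by
  rw [inner_av]; rfl
lemma inner_ba (m n : ℤ) : inner ℂ (bv m) (av n) = (0 : ℂ) := by
  rw [inner_bv]; rfl

section algebra
open Matrix

/-- block of the shift -/
def Am (t r : ℂ) : Matrix (Fin 2) (Fin 2) ℂ := !![t, r - t; 0, r]
/-- adjoint block -/
def Bm (t r : ℂ) : Matrix (Fin 2) (Fin 2) ℂ := !![r, 0; t - r, t]

lemma Am_inv (t r : ℂ) (h : t * r = 1) : Am r t * Am t r = 1 ∧ Am t r * Am r t = 1 := by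
  constructor <;> ext i j <;> fin_cases i <;> fin_cases j <;> simp [Am] <;> first | linear_combination h | ring

lemma Bm_inv (t r : ℂ) (h : t * r = 1) : Bm r t * Bm t r = 1 ∧ Bm t r * Bm r t = 1 := by
  constructor <;> ext i j <;> fin_cases i <;> fin_cases j <;> simp [Bm] <;> first | linear_combination h | ring

lemma G_inv (t r : ℂ) (h : t * r = 1) : (Am r t * Bm r t) * (Bm t r * Am t r) = 1 := by
  calc _ = Am r t * (Bm r t * Bm t r) * Am t r := by simp only [Matrix.mul_assoc]
    _ = 1 := by rw [(Bm_inv t r h).1, Matrix.mul_one, (Am_inv t r h).1]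

lemma G_add (t r : ℂ) (h : t * r = 1) :
    Bm t r * Am t r + Am r t * Bm r t = (2 - (t - r) ^ 2) • (1 : Matrix (Fin 2) (Fin 2) ℂ) := by
  ext i j; fin_cases i <;> fin_cases j <;> simp [Am, Bm] <;> first | linear_combination 2 * h | ring

lemma G_sq (t r : ℂ) (h : t * r = 1) :
    (Bm t r * Am t r) * (Bm t r * Am t r) = (2 - (t - r) ^ 2) • (Bm t r * Am t r) - 1 := by
  have h1 := G_inv t r h
  have h2 := G_add t r h
  have h3 : ((2 - (t - r) ^ 2) • (1 : Matrix (Fin 2) (Fin 2) ℂ)) * (Bm t r * Am t r)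
    = (2 - (t - r) ^ 2) • (Bm t r * Am t r) := by rw [smul_mul_assoc, Matrix.one_mul]
  rw [← h3, ← h2, add_mul, h1, add_sub_cancel_right]

lemma M_zero (t r t' r' : ℂ) (h : t * r = 1) (h' : t' * r' = 1)
    (hne : (t - r) ^ 2 ≠ (t' - r') ^ 2) (M : Matrix (Fin 2) (Fin 2) ℂ)
    (hM : (Bm t r * Am t r) * M = M * (Bm t' r' * Am t' r')) : M = 0 := by
  have h1 := G_inv t r h
  have e := G_sq t r h
  have e' := G_sq t' r' h'
  set G := Bm t r * Am t r
  set G' := Bm t' r' * Am t' r'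
  have e2 : (G * G) * M = M * (G' * G') := by
    rw [Matrix.mul_assoc, hM, ← Matrix.mul_assoc, hM, Matrix.mul_assoc]
  rw [e, e', sub_mul, mul_sub, Matrix.one_mul, Matrix.mul_one, smul_mul_assoc, mul_smul_comm,
    ← hM] at e2
  have e3 : ((t' - r') ^ 2 - (t - r) ^ 2) • (G * M) = 0 := by
    have := sub_left_injective e2
    have h4 := sub_eq_zero.mpr this
    rw [← sub_smul] at h4
    rw [← h4]; congr 1; ring
  have e4 : G * M = 0 := (smul_eq_zero.mp e3).resolve_left (sub_ne_zero.mpr hne.symm)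
  calc M = ((Am r t * Bm r t) * G) * M := by rw [h1, Matrix.one_mul]
    _ = 0 := by rw [Matrix.mul_assoc, e4, Matrix.mul_zero]

lemma M_scalar (t r t' r' : ℂ) (h : t * r = 1) (h' : t' * r' = 1)
    (hne : (t - r) ^ 2 ≠ (t' - r') ^ 2) (hk : t - r ≠ 0) (hk' : t' - r' ≠ 0)
    (M : Matrix (Fin 2) (Fin 2) ℂ)
    (hM : (Bm t r * Am t r) * M = M * (Bm t r * Am t r))
    (hM' : (Am t' r' * Bm t' r') * M = M * (Am t' r' * Bm t' r')) :
    M = (M 0 0) • (1 : Matrix (Fin 2) (Fin 2) ℂ) := by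
  have a1 := congrFun (congrFun hM 0) 1
  have a2 := congrFun (congrFun hM 1) 0
  have b1 := congrFun (congrFun hM' 0) 1
  have b2 := congrFun (congrFun hM' 1) 0
  simp [Am, Bm, Matrix.mul_apply, Fin.sum_univ_two] at a1 a2 b1 b2
  set α := M 0 0
  set β := M 0 1
  set γ := M 1 0
  set δ := M 1 1
  have c1 : -(α - δ) * r = β * (t - r) := by
    apply mul_left_cancel₀ hk; linear_combination -a1
  have c2 : (α - δ) * t = γ * (t - r) := by
    apply mul_left_cancel₀ hk; linear_combination a2
  have d1 : (α - δ) * t' = β * (t' - r') := by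
    apply mul_left_cancel₀ hk'; linear_combination b1
  have d2 : (α - δ) * r' = -γ * (t' - r') := by
    apply mul_left_cancel₀ hk'; linear_combination b2
  have c12 : (-(α - δ) * r) * ((α - δ) * t) = (β * (t - r)) * (γ * (t - r)) := by rw [c1, c2]
  have d12 : ((α - δ) * t') * ((α - δ) * r') = (β * (t' - r')) * (-γ * (t' - r')) := by
    rw [d1, d2]
  have e : β * γ * ((t - r) ^ 2 - (t' - r') ^ 2) = 0 := by
    linear_combination -c12 - d12 - (α - δ) ^ 2 * h + (α - δ) ^ 2 * h'
  have e1 : β * γ = 0 := (mul_eq_zero.mp e).resolve_right (sub_ne_zero.mpr hne)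
  have e2 : (α - δ) = 0 := by
    have : (α - δ) ^ 2 = 0 := by
      linear_combination -c12 - (t - r) ^ 2 * e1 - (α - δ) ^ 2 * h
    exact pow_eq_zero_iff (two_ne_zero) |>.mp this
  rw [e2] at c1 c2
  have f1 : β = 0 := by
    have : β * (t - r) = 0 := by rw [← c1]; simp
    exact (mul_eq_zero.mp this).resolve_right hk
  have f2 : γ = 0 := by
    have : γ * (t - r) = 0 := by rw [← c2]; simp
    exact (mul_eq_zero.mp this).resolve_right hk
  have f3 : δ = α := by linear_combination -e2
  ext i j; fin_cases i <;> fin_cases j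
  · simp [α]
  · simpa using f1
  · simpa using f2
  · simpa using f3

lemma family (t r : ℤ → ℂ) (h : ∀ n, t n * r n = 1) (N : ℤ)
    (hne : ∀ m n, N ≤ m → N ≤ n → m ≠ n → (t m - r m) ^ 2 ≠ (t n - r n) ^ 2)
    (hk : ∀ n, N ≤ n → t n - r n ≠ 0)
    (M : ℤ → ℤ → Matrix (Fin 2) (Fin 2) ℂ)
    (h1 : ∀ m n, M (m + 1) (n + 1) * Am (t n) (r n) = Am (t m) (r m) * M m n)
    (h2 : ∀ m n, Bm (t m) (r m) * M (m + 1) (n + 1) = M m n * Bm (t n) (r n)) :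
    ∃ p : ℂ, (∀ n, M n n = p • (1 : Matrix (Fin 2) (Fin 2) ℂ)) ∧ ∀ m n, m ≠ n → M m n = 0 := by
  have hG : ∀ m n, (Bm (t m) (r m) * Am (t m) (r m)) * M m n
      = M m n * (Bm (t n) (r n) * Am (t n) (r n)) := by
    intro m n
    rw [Matrix.mul_assoc, ← h1, ← Matrix.mul_assoc, h2, Matrix.mul_assoc]
  have hF : ∀ m n, (Am (t m) (r m) * Bm (t m) (r m)) * M (m + 1) (n + 1)
      = M (m + 1) (n + 1) * (Am (t n) (r n) * Bm (t n) (r n)) := by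
    intro m n
    rw [Matrix.mul_assoc, h2, ← Matrix.mul_assoc, ← h1, Matrix.mul_assoc]
  have hdown : ∀ m n, M m n = Am (r m) (t m) * M (m + 1) (n + 1) * Am (t n) (r n) := by
    intro m n
    rw [Matrix.mul_assoc, h1, ← Matrix.mul_assoc, (Am_inv _ _ (h m)).1, Matrix.one_mul]
  have hup : ∀ m n, M (m + 1) (n + 1) = Am (t m) (r m) * M m n * Am (r n) (t n) := by
    intro m n
    rw [← h1, Matrix.mul_assoc, (Am_inv _ _ (h n)).2, Matrix.mul_one]
  refine ⟨M (N + 1) (N + 1) 0 0, ?_, ?_⟩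
  · have hbase := M_scalar (t (N+1)) (r (N+1)) (t N) (r N) (h _) (h _)
      (hne _ _ (by omega) (by omega) (by omega)) (hk _ (by omega)) (hk _ le_rfl)
      (M (N+1) (N+1)) (hG _ _) (hF _ _)
    intro n
    generalize M (N + 1) (N + 1) 0 0 = p at hbase ⊢
    induction n using Int.inductionOn' (b := N + 1) with
    | zero => exact hbase
    | succ k _ ih =>
      rw [hup, ih, mul_smul_comm, smul_mul_assoc, Matrix.mul_one, (Am_inv _ _ (h k)).2]
    | pred k _ ih =>
      rw [hdown, sub_add_cancel, ih, mul_smul_comm, smul_mul_assoc, Matrix.mul_one,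
        (Am_inv _ _ (h _)).1]
  · have key : ∀ k : ℕ, ∀ m n : ℤ, m ≠ n → N ≤ m + k → N ≤ n + k → M m n = 0 := by
      intro k
      induction k with
      | zero =>
        intro m n hmn hm hn
        exact M_zero _ _ _ _ (h m) (h n) (hne m n (by simpa using hm) (by simpa using hn) hmn) _
          (hG m n)
      | succ k ih =>
        intro m n hmn hm hn
        rw [hdown, ih (m + 1) (n + 1) (by omega) (by push_cast at hm; omega)
          (by push_cast at hn; omega)]
        simp
    intro m n hmn
    exact key ((N - m).toNat + (N - n).toNat) m n hmn (by omega) (by omega)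

end algebra

lemma irred_of (T : H2 →L[ℂ] H2) (t r : ℤ → ℂ) (h : ∀ n, t n * r n = 1)
    (hc : ∀ n, (starRingEnd ℂ) (t n) = r n) (N : ℤ)
    (hne : ∀ m n, N ≤ m → N ≤ n → m ≠ n → (t m - r m) ^ 2 ≠ (t n - r n) ^ 2)
    (hk : ∀ n, N ≤ n → t n - r n ≠ 0)
    (hTa : ∀ n, T (av n) = t n • av (n + 1))
    (hTb : ∀ n, T (bv n) = (r n - t n) • av (n + 1) + r n • bv (n + 1)) :
    IsIrreducibleOp T := by
  intro K hKc hK hK'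
  have hc' : ∀ n, (starRingEnd ℂ) (r n) = t n := fun n => by rw [← hc, Complex.conj_conj]
  have hSa : ∀ n, ContinuousLinearMap.adjoint T (av (n + 1))
      = r n • av n + (t n - r n) • bv n := by
    intro n
    apply H2_ext
    · intro m
      rw [ContinuousLinearMap.adjoint_inner_right, hTa]
      simp only [inner_smul_left, inner_smul_right, inner_add_left, inner_add_right, inner_aa,
        inner_ab, inner_ba, inner_bb, hc]
      by_cases hmn : m = n <;> simp [hmn]
    · intro m
      rw [ContinuousLinearMap.adjoint_inner_right, hTb]
      simp only [inner_smul_left, inner_smul_right, inner_add_left, inner_add_right, inner_aa,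
        inner_ab, inner_ba, inner_bb, map_sub, hc, hc']
      by_cases hmn : m = n <;> simp [hmn]
  have hSb : ∀ n, ContinuousLinearMap.adjoint T (bv (n + 1)) = t n • bv n := by
    intro n
    apply H2_ext
    · intro m
      rw [ContinuousLinearMap.adjoint_inner_right, hTa]
      simp only [inner_smul_left, inner_smul_right, inner_add_left, inner_add_right, inner_aa,
        inner_ab, inner_ba, inner_bb, hc]
      simp
    · intro m
      rw [ContinuousLinearMap.adjoint_inner_right, hTb]
      simp only [inner_smul_left, inner_smul_right, inner_add_left, inner_add_right, inner_aa,
        inner_ab, inner_ba, inner_bb, map_sub, hc, hc']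
      by_cases hmn : m = n <;> simp [hmn]
  have : CompleteSpace K := hKc.completeSpace_coe
  set P : H2 →L[ℂ] H2 := K.starProjection with hP
  have hsym : ∀ x y : H2, inner ℂ (P x) y = inner ℂ x (P y) := fun x y =>
    Submodule.inner_starProjection_left_eq_right K x y
  -- P commutes
  have comm : ∀ S : H2 →L[ℂ] H2, (∀ x ∈ K, S x ∈ K) →
      (∀ x ∈ K, ContinuousLinearMap.adjoint S x ∈ K) → ∀ x, P (S x) = S (P x) := by
    intro S h1 h2 x
    have hx : S x = S (P x) + S (x - P x) := by rw [← map_add]; congr 1; abel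
    have hm : P (S (P x)) = S (P x) :=
      Submodule.starProjection_eq_self_iff.mpr (h1 _ (Submodule.starProjection_apply_mem K x))
    have ho : P (S (x - P x)) = 0 := by
      apply (Submodule.starProjection_apply_eq_zero_iff K).mpr
      rw [Submodule.mem_orthogonal]
      intro u hu
      rw [← ContinuousLinearMap.adjoint_inner_left]
      exact (Submodule.mem_orthogonal K _).mp (Submodule.sub_starProjection_mem_orthogonal x) _
        (h2 u hu)
    rw [hx, map_add, hm, ho, add_zero]
  have cT := comm T hK hK'
  have cS := comm (ContinuousLinearMap.adjoint T) hK'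
    (by rw [ContinuousLinearMap.adjoint_adjoint]; exact hK)
  -- matrix blocks
  let M : ℤ → ℤ → Matrix (Fin 2) (Fin 2) ℂ := fun m n =>
    !![inner ℂ (av m) (P (av n)), inner ℂ (av m) (P (bv n));
       inner ℂ (bv m) (P (av n)), inner ℂ (bv m) (P (bv n))]
  have r1 : ∀ (x y : H2), inner ℂ x (P (T y)) = inner ℂ (ContinuousLinearMap.adjoint T x) (P y) :=
    fun x y => by rw [cT, ContinuousLinearMap.adjoint_inner_left]
  have r2 : ∀ (x y : H2), inner ℂ (T x) (P y) = inner ℂ x (P (ContinuousLinearMap.adjoint T y)) :=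
    fun x y => by rw [cS, ContinuousLinearMap.adjoint_inner_right]
  have m1 : ∀ m n, M (m + 1) (n + 1) * Am (t n) (r n) = Am (t m) (r m) * M m n := by
    intro m n
    have e1 := r1 (av (m+1)) (av n)
    have e2 := r1 (av (m+1)) (bv n)
    have e3 := r1 (bv (m+1)) (av n)
    have e4 := r1 (bv (m+1)) (bv n)
    simp only [hTa, hTb, hSa, hSb, map_add, map_smul, inner_smul_left, inner_smul_right,
      inner_add_left, inner_add_right, map_sub, hc, hc'] at e1 e2 e3 e4
    ext i j; fin_cases i <;> fin_cases j <;> simp [-WithLp.prod_inner_apply, Am, M, Matrix.mul_apply, Fin.sum_univ_two]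
    · linear_combination e1
    · linear_combination e2
    · linear_combination e3
    · linear_combination e4
  have m2 : ∀ m n, Bm (t m) (r m) * M (m + 1) (n + 1) = M m n * Bm (t n) (r n) := by
    intro m n
    have e1 := r2 (av m) (av (n+1))
    have e2 := r2 (av m) (bv (n+1))
    have e3 := r2 (bv m) (av (n+1))
    have e4 := r2 (bv m) (bv (n+1))
    simp only [hTa, hTb, hSa, hSb, map_add, map_smul, inner_smul_left, inner_smul_right,
      inner_add_left, inner_add_right, map_sub, hc, hc'] at e1 e2 e3 e4
    ext i j; fin_cases i <;> fin_cases j <;> simp [-WithLp.prod_inner_apply, Bm, M, Matrix.mul_apply, Fin.sum_univ_two]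
    · linear_combination e1
    · linear_combination e2
    · linear_combination e3
    · linear_combination e4
  obtain ⟨p, hp, h0⟩ := family t r h N hne hk M m1 m2
  have ent : ∀ m n i j, M m n i j = if m = n then (if i = j then p else 0) else 0 := by
    intro m n i j
    by_cases hmn : m = n
    · subst hmn; rw [hp]; simp [Matrix.one_apply]
    · rw [h0 m n hmn]; simp [hmn]
  have Pa : ∀ n, P (av n) = p • av n := by
    intro n
    apply H2_ext
    · intro m
      have := ent m n 0 0
      simp [-WithLp.prod_inner_apply, M] at this
      rw [this, inner_smul_right, inner_aa]; simp
    · intro m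
      have := ent m n 1 0
      simp [-WithLp.prod_inner_apply, M] at this
      rw [this, inner_smul_right, inner_ba]; simp
  have Pb : ∀ n, P (bv n) = p • bv n := by
    intro n
    apply H2_ext
    · intro m
      have := ent m n 0 1
      simp [-WithLp.prod_inner_apply, M] at this
      rw [this, inner_smul_right, inner_ab]; simp
    · intro m
      have := ent m n 1 1
      simp [-WithLp.prod_inner_apply, M] at this
      rw [this, inner_smul_right, inner_bb]; simp
  have PP : ∀ x, P x = (starRingEnd ℂ p) • x := by
    intro x
    apply H2_ext
    · intro m
      rw [← hsym, Pa, inner_smul_left, inner_smul_right]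
    · intro m
      rw [← hsym, Pb, inner_smul_left, inner_smul_right]
  by_cases hp0 : p = 0
  · left
    rw [Submodule.eq_bot_iff]
    intro x hx
    have := PP x
    rw [hP, Submodule.starProjection_eq_self_iff.mpr hx] at this
    rw [this, hp0]; simp
  · right
    rw [Submodule.eq_top_iff']
    intro x
    have h1 : P x ∈ K := Submodule.starProjection_apply_mem K x
    rw [PP] at h1
    exact (K.smul_mem_iff (by simpa using hp0)).mp h1

/-- Example 3.4: with `tₙ = (n + 1/2 + s)/(n + 1/2 − s)` for a nonzero purely imaginary `s`,
the operator `T(tₙ, 1)` is irreducible. -/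
theorem irreducibility_example_pure_imaginary
    (s : ℂ) (hs : s ≠ 0) (hs' : s.re = 0)
    (T0 T1 X : Hl →L[ℂ] Hl)
    (hT0 : ∀ n : ℤ,
      T0 (eb n) = ((((n : ℂ) + 1 / 2 + s) / ((n : ℂ) + 1 / 2 - s)) • eb (n + 1)))
    (hT1 : ∀ n : ℤ,
      T1 (eb n) = ((((n : ℂ) + 1 / 2 + s) / ((n : ℂ) + 1 / 2 - s))⁻¹ • eb (n + 1)))
    (hX : ∀ n : ℤ, X (eb n) = eb n)
    (hXT : X.comp T1 ≠ T0.comp X) :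
    IsIrreducibleOp (blockT T0 T1 X) := by
  set t : ℤ → ℂ := fun n => ((n : ℂ) + 1 / 2 + s) / ((n : ℂ) + 1 / 2 - s) with ht
  obtain ⟨σ, rfl⟩ : ∃ σ : ℝ, s = σ * I := ⟨s.im, by
    apply Complex.ext <;> simp [hs']⟩
  have hσ : σ ≠ 0 := by rintro rfl; simp at hs
  have hx : ∀ n : ℤ, ((n : ℝ) + 1 / 2) ≠ 0 := by
    intro n hn
    have : (2 * n + 1 : ℝ) = 0 := by linarith
    have : (2 * n + 1 : ℤ) = 0 := by exact_mod_cast this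
    omega
  have hre : ∀ n : ℤ, ((n : ℂ) + 1 / 2) = (((n : ℝ) + 1 / 2 : ℝ) : ℂ) := by
    intro n; push_cast; rfl
  have hp : ∀ n : ℤ, ((n : ℂ) + 1 / 2 + σ * I) ≠ 0 := by
    intro n hn
    have := congrArg Complex.re hn
    rw [hre] at this
    simp at this
    exact hx n (by simpa using this)
  have hm : ∀ n : ℤ, ((n : ℂ) + 1 / 2 - σ * I) ≠ 0 := by
    intro n hn
    have := congrArg Complex.re hn
    rw [hre] at this
    simp at this
    exact hx n (by simpa using this)
  have ht0 : ∀ n, t n ≠ 0 := fun n => div_ne_zero (hp n) (hm n)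
  have hdiff : ∀ n : ℤ, t n - (t n)⁻¹
      = ((4 * ((n : ℝ) + 1 / 2) * σ / (((n : ℝ) + 1 / 2) ^ 2 + σ ^ 2) : ℝ) : ℂ) * I := by
    intro n
    have hd : ((((n : ℝ) + 1 / 2) ^ 2 + σ ^ 2 : ℝ) : ℂ)
        = ((n : ℂ) + 1 / 2 + σ * I) * ((n : ℂ) + 1 / 2 - σ * I) := by
      push_cast
      linear_combination ((σ : ℂ) ^ 2) * Complex.I_sq
    rw [Complex.ofReal_div, hd]
    simp only [ht, inv_div]
    have h1 := hp n
    have h2 := hm n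
    rw [div_sub_div _ _ h2 h1, div_mul_eq_mul_div, mul_comm (_ - _ : ℂ) (_ + _ : ℂ)]
    congr 1
    push_cast
    ring
  obtain ⟨N, hN⟩ : ∃ N : ℤ, σ ^ 2 + 1 ≤ N := ⟨⌈σ ^ 2 + 1⌉, Int.le_ceil _⟩
  have hpos : ∀ n : ℤ, N ≤ n → σ ^ 2 + 1 < (n : ℝ) + 1 / 2 := by
    intro n hn
    have : (N : ℝ) ≤ n := by exact_mod_cast hn
    linarith
  refine irred_of _ t (fun n => (t n)⁻¹) (fun n => mul_inv_cancel₀ (ht0 n)) ?_ N ?_ ?_ ?_ ?_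
  · intro n
    simp only [ht, inv_div]
    rw [hre]
    rw [map_div₀, map_add, map_sub, map_mul, Complex.conj_ofReal, Complex.conj_ofReal,
      Complex.conj_I, mul_neg, sub_neg_eq_add, ← sub_eq_add_neg]
  · intro m n hmN hnN hmn heq
    rw [hdiff, hdiff, mul_pow, mul_pow] at heq
    have heq2 := mul_right_cancel₀ (by simp) heq
    have heq3 : (4 * ((m : ℝ) + 1 / 2) * σ / (((m : ℝ) + 1 / 2) ^ 2 + σ ^ 2)) ^ 2
      = (4 * ((n : ℝ) + 1 / 2) * σ / (((n : ℝ) + 1 / 2) ^ 2 + σ ^ 2)) ^ 2 := by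
      exact_mod_cast heq2
    have hxy : (m : ℝ) + 1 / 2 ≠ (n : ℝ) + 1 / 2 := by
      intro h; apply hmn
      have : (m : ℝ) = n := by linarith
      exact_mod_cast this
    have h1 := hpos m hmN
    have h2 := hpos n hnN
    generalize (m : ℝ) + 1 / 2 = x at *
    generalize (n : ℝ) + 1 / 2 = y at *
    have hs2 : 0 < σ ^ 2 := by positivity
    have hx0 : 0 < x := by linarith
    have hy0 : 0 < y := by linarith
    rw [div_pow, div_pow, div_eq_div_iff (by positivity) (by positivity)] at heq3
    have h5 : (16 * σ ^ 2) * (((x - y) * (x * y - σ ^ 2)) * ((x + y) * (x * y + σ ^ 2))) = 0 := by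
      linear_combination -heq3
    have h6 : x * y - σ ^ 2 ≠ 0 := by
      have : 0 < x * y - σ ^ 2 := by nlinarith
      exact this.ne'
    have h7 : x - y ≠ 0 := sub_ne_zero.mpr hxy
    have h8 : x + y ≠ 0 := by positivity
    have h9 : x * y + σ ^ 2 ≠ 0 := by positivity
    have h10 : 16 * σ ^ 2 ≠ 0 := by positivity
    exact (mul_ne_zero h10 (mul_ne_zero (mul_ne_zero h7 h6) (mul_ne_zero h8 h9))) h5
  · intro n _
    rw [hdiff]
    refine mul_ne_zero ?_ Complex.I_ne_zero
    rw [Complex.ofReal_ne_zero]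
    have := hx n
    positivity
  · intro n
    apply WithLp.ofLp_injective
    apply Prod.ext
    · simp [blockT, blockT2, av, hT0, ht]
    · simp [blockT, blockT2, av]
  · intro n
    apply WithLp.ofLp_injective
    apply Prod.ext
    · simp [blockT, blockT2, av, bv, hT0, hT1, hX, ht, sub_smul]
    · simp [blockT, blockT2, av, bv, hT1, ht]
end
end

section
/- Let (w_n)_{n∈ℤ} and (v_n)_{n∈ℤ} be sequences of complex numbers with |w_n| = |v_n| = 1 for all n, let (d_n)_{n∈ℤ} be a bounded sequence of complex numbers with XT₁ ≠ T₀X, and let T = T(w_n, v_n, d_n) be the associated bounded block-shift operator on H ⊕ H. Suppose there exist a bijection g : ℤ → ℤ and N ∈ ℤ such that the numbers |d_{n+1}v_n − d_n w_n|², n > N, are pairwise distinct, and |d_{n+1}v_n − d_n w_n|² = |d_{g(n)+1}v_{g(n)} − d_{g(n)}w_{g(n)}|² for every n ∈ ℤ. If for every n ∈ ℤ at least one of the following holds, where c_n = conj(d_n)·conj(w_n)·v_n: (1) d_{n+1}c_n + d_n c_{n−1} − d_{n+1}·conj(w_n)·v_n·c_{n−1} is not a real number; (2) (conj(d_{n+1})·w_n·v_n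 − conj(d_n))·|d_n v_{n−1} − d_{n−1}w_{n−1}|² ≠ (conj(d_{n−1})·conj(w_{n−1})·v_{n−1} − conj(d_n))·|d_{n+1}v_n − d_n w_n|²; then T is irreducible and weakly homogeneous. -/
noncomputable section

open Complex Metric

/-- The action of the Möbius map `z ↦ e^{iθ}(z − a)/(1 − conj(a) z)` on an operator:
`φ(A) = e^{iθ}(A − a)(I − conj(a)A)⁻¹`. -/
def mobiusOp {E : Type*} [NormedAddCommGroup E] [NormedSpace ℂ E]
    (θ : ℝ) (a : ℂ) (A : E →L[ℂ] E) : E →L[ℂ] E :=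
  Complex.exp (θ * Complex.I) •
    ((A - a • (1 : E →L[ℂ] E)) * Ring.inverse (1 - (starRingEnd ℂ) a • A))

/-- Two bounded operators are similar if they are intertwined by a bounded
invertible operator. -/
def SimilarOp {E : Type*} [NormedAddCommGroup E] [NormedSpace ℂ E]
    (A B : E →L[ℂ] E) : Prop :=
  ∃ S : (E →L[ℂ] E)ˣ, (S : E →L[ℂ] E) * A = B * (S : E →L[ℂ] E)

/-- A bounded operator is weakly homogeneous if its spectrum is contained in the closed
unit disc and `φ(A)` is similar to `A` for every Möbius map `φ`. -/
def WeaklyHomogeneousOp {E : Type*} [NormedAddCommGroup E] [NormedSpace ℂ E]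
    (A : E →L[ℂ] E) : Prop :=
  spectrum ℂ A ⊆ closedBall (0 : ℂ) 1 ∧
    ∀ (θ : ℝ) (a : ℂ), ‖a‖ < 1 → SimilarOp (mobiusOp θ a A) A
/-- `|d_{n+1} vₙ − dₙ wₙ|²`, the quantity determining the singular values of `Tₙ`. -/
def sqSeq (w v d : ℤ → ℂ) (n : ℤ) : ℝ := ‖d (n + 1) * v n - d n * w n‖ ^ 2

/-- `cₙ = conj(dₙ)·conj(wₙ)·vₙ`. -/
def cSeq' (w v d : ℤ → ℂ) (n : ℤ) : ℂ :=
  starRingEnd ℂ (d n) * starRingEnd ℂ (w n) * v n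

/-! ### Basis facts -/

lemma inner_eb (n : ℤ) (x : Hl) : inner ℂ (eb n) x = x n := by
  rw [eb, lp.inner_single_left]; simp

lemma hl_ext {x y : Hl} (h : ∀ n, inner ℂ (eb n) x = inner ℂ (eb n) y) : x = y := by
  apply lp.ext; funext n; simpa [inner_eb] using h n

lemma inner_eb_eb (m n : ℤ) : inner ℂ (eb m) (eb n) = if m = n then (1 : ℂ) else 0 := by
  rw [inner_eb, eb, lp.single_apply]
  split_ifs with h
  · subst h; simp
  · simp [h]

lemma norm_eb (n : ℤ) : ‖eb n‖ = 1 := by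
  have h := inner_eb_eb n n
  rw [inner_self_eq_norm_sq_to_K, if_pos rfl] at h
  have h2 : ‖eb n‖ ^ 2 = 1 := Complex.ofReal_injective (by push_cast; exact h)
  have := norm_nonneg (eb n)
  nlinarith

lemma hl_closed_top (K : Submodule ℂ Hl) (hK : IsClosed (K : Set Hl)) (h : ∀ n, eb n ∈ K) :
    K = ⊤ := by
  rw [eq_top_iff]
  intro x _
  have hs := lp.hasSum_single (p := 2) (by norm_num) x
  refine hK.mem_of_tendsto hs (Filter.Eventually.of_forall fun s => ?_)
  refine K.sum_mem fun i _ => ?_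
  have : lp.single (E := fun _ : ℤ => ℂ) 2 i (x i) = x i • eb i := by
    rw [eb, ← lp.single_smul]; simp
  rw [this]
  exact K.smul_mem _ (h i)

lemma hl_clm_ext {F : Type*} [NormedAddCommGroup F] [NormedSpace ℂ F] {A B : Hl →L[ℂ] F}
    (h : ∀ n, A (eb n) = B (eb n)) : A = B := by
  have : LinearMap.ker (A - B : Hl →L[ℂ] F).toLinearMap = ⊤ := by
    apply hl_closed_top
    · exact (A - B).isClosed_ker
    · intro n; simp [h]
  ext1 x
  have hx : x ∈ LinearMap.ker (A - B : Hl →L[ℂ] F).toLinearMap := by rw [this]; trivial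
  simpa [sub_eq_zero] using hx

/-! ### Irreducibility -/

def E0 (n : ℤ) : H2 := WithLp.toLp 2 (eb n, 0)
def E1 (n : ℤ) : H2 := WithLp.toLp 2 (0, eb n)

lemma inner_E0 (n : ℤ) (x : H2) : inner ℂ (E0 n) x = x.fst n := by
  rw [E0, WithLp.prod_inner_apply]; simp [inner_eb]
lemma inner_E1 (n : ℤ) (x : H2) : inner ℂ (E1 n) x = x.snd n := by
  rw [E1, WithLp.prod_inner_apply]; simp [inner_eb]

lemma h2_ext {x y : H2} (h0 : ∀ n, inner ℂ (E0 n) x = inner ℂ (E0 n) y)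
    (h1 : ∀ n, inner ℂ (E1 n) x = inner ℂ (E1 n) y) : x = y := by
  have a : x.fst = y.fst := by
    apply lp.ext; funext n; simpa only [inner_E0] using h0 n
  have b : x.snd = y.snd := by
    apply lp.ext; funext n; simpa only [inner_E1] using h1 n
  apply WithLp.ofLp_injective
  exact Prod.ext a b

lemma inner_E00 (m n : ℤ) : inner ℂ (E0 m) (E0 n) = if m = n then (1 : ℂ) else 0 := by
  rw [inner_E0, ← inner_eb_eb, inner_eb]; rfl
lemma inner_E11 (m n : ℤ) : inner ℂ (E1 m) (E1 n) = if m = n then (1 : ℂ) else 0 := by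
  rw [inner_E1, ← inner_eb_eb, inner_eb]; rfl
lemma inner_E01 (m n : ℤ) : inner ℂ (E0 m) (E1 n) = 0 := by
  rw [inner_E0]; rfl
lemma inner_E10 (m n : ℤ) : inner ℂ (E1 m) (E0 n) = 0 := by
  rw [inner_E1]; rfl

lemma h2_clm_ext {A B : H2 →L[ℂ] H2} (h0 : ∀ n, A (E0 n) = B (E0 n))
    (h1 : ∀ n, A (E1 n) = B (E1 n)) : A = B := by
  let L := (WithLp.prodContinuousLinearEquiv 2 ℂ Hl Hl).symm.toContinuousLinearMap
  have e0 : (A.comp L).comp (ContinuousLinearMap.inl ℂ Hl Hl) =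
      (B.comp L).comp (ContinuousLinearMap.inl ℂ Hl Hl) := hl_clm_ext h0
  have e1 : (A.comp L).comp (ContinuousLinearMap.inr ℂ Hl Hl) =
      (B.comp L).comp (ContinuousLinearMap.inr ℂ Hl Hl) := hl_clm_ext h1
  ext1 x
  have hx : x = L (ContinuousLinearMap.inl ℂ Hl Hl x.fst) +
      L (ContinuousLinearMap.inr ℂ Hl Hl x.snd) := by
    rw [← map_add]
    apply WithLp.ofLp_injective
    simp [L]
    rfl
  rw [hx, map_add, map_add]
  exact congrArg₂ (· + ·) (DFunLike.congr_fun e0 x.fst) (DFunLike.congr_fun e1 x.snd)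

section irr
variable {w v d : ℤ → ℂ} {T0 T1 X : Hl →L[ℂ] Hl}

lemma blockT_E0 (hT0 : ∀ n : ℤ, T0 (eb n) = w n • eb (n + 1)) (n : ℤ) :
    blockT T0 T1 X (E0 n) = w n • E0 (n + 1) := by
  apply WithLp.ofLp_injective
  simp [blockT, blockT2, E0, hT0]

lemma blockT_E1 (hT0 : ∀ n : ℤ, T0 (eb n) = w n • eb (n + 1))
    (hT1 : ∀ n : ℤ, T1 (eb n) = v n • eb (n + 1))
    (hX : ∀ n : ℤ, X (eb n) = d n • eb n) (n : ℤ) :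
    blockT T0 T1 X (E1 n) = (d (n + 1) * v n - d n * w n) • E0 (n + 1) + v n • E1 (n + 1) := by
  apply WithLp.ofLp_injective
  simp [blockT, blockT2, E0, E1, hT0, hT1, hX, sub_smul, smul_smul, mul_comm]

/-- entries of an operator commuting with `T`, `T*` -/
lemma adj_E0 {A : H2 →L[ℂ] H2} {w b v : ℤ → ℂ} (h0 : ∀ n, A (E0 n) = w n • E0 (n + 1))
    (h1 : ∀ n, A (E1 n) = b n • E0 (n + 1) + v n • E1 (n + 1)) (n : ℤ) :
    ContinuousLinearMap.adjoint A (E0 (n + 1)) =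
      (starRingEnd ℂ) (w n) • E0 n + (starRingEnd ℂ) (b n) • E1 n := by
  apply h2_ext
  · intro m
    rw [ContinuousLinearMap.adjoint_inner_right, h0]
    simp only [inner_smul_left, inner_smul_right, inner_add_right, inner_E00, inner_E01,
      add_left_inj]
    split_ifs with h <;> simp [h]
  · intro m
    rw [ContinuousLinearMap.adjoint_inner_right, h1]
    simp only [inner_smul_left, inner_smul_right, inner_add_right, inner_add_left, inner_E00,
      inner_E01, inner_E10, inner_E11, add_left_inj]
    split_ifs with h <;> simp [h]

lemma adj_E1 {A : H2 →L[ℂ] H2} {w b v : ℤ → ℂ} (h0 : ∀ n, A (E0 n) = w n • E0 (n + 1))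
    (h1 : ∀ n, A (E1 n) = b n • E0 (n + 1) + v n • E1 (n + 1)) (n : ℤ) :
    ContinuousLinearMap.adjoint A (E1 (n + 1)) = (starRingEnd ℂ) (v n) • E1 n := by
  apply h2_ext
  · intro m
    rw [ContinuousLinearMap.adjoint_inner_right, h0]
    simp only [inner_smul_left, inner_smul_right, inner_E01, mul_zero]
  · intro m
    rw [ContinuousLinearMap.adjoint_inner_right, h1]
    simp only [inner_smul_left, inner_smul_right, inner_add_right, inner_add_left, inner_E00,
      inner_E01, inner_E10, inner_E11, add_left_inj]
    split_ifs with h <;> simp [h]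
end irr

def Tm (w b v : ℂ) : Matrix (Fin 2) (Fin 2) ℂ := !![w, b; 0, v]

lemma conj_mul_of_norm {w : ℂ} (h : ‖w‖ = 1) : (starRingEnd ℂ) w * w = 1 := by
  rw [mul_comm, Complex.mul_conj, Complex.normSq_eq_norm_sq, h]; simp

lemma Tm_inv {w b v : ℂ} (hw : ‖w‖ = 1) (hv : ‖v‖ = 1) : ∃ L, L * Tm w b v = 1 ∧ Tm w b v * L = 1 := by
  have h1 := conj_mul_of_norm hw
  have h2 := conj_mul_of_norm hv
  refine ⟨!![(starRingEnd ℂ) w, -((starRingEnd ℂ) w * b * (starRingEnd ℂ) v); 0, (starRingEnd ℂ) v],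
    ?_, ?_⟩
  · ext i j
    fin_cases i <;> fin_cases j <;> simp [Tm, h1, h2]
    linear_combination (-(starRingEnd ℂ) w * b) * h2
  · ext i j
    fin_cases i <;> fin_cases j <;> simp [Tm]
    · linear_combination h1
    · linear_combination (-b * (starRingEnd ℂ) v) * h1
    · linear_combination h2

lemma Tm_CH {w b v : ℂ} (hw : ‖w‖ = 1) (hv : ‖v‖ = 1) :
    ((Tm w b v).conjTranspose * Tm w b v) * ((Tm w b v).conjTranspose * Tm w b v) =
      (2 + ((‖b‖ ^ 2 : ℝ) : ℂ)) • ((Tm w b v).conjTranspose * Tm w b v) - 1 := by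
  have h1 := conj_mul_of_norm hw
  have h2 := conj_mul_of_norm hv
  have hb : ((‖b‖ ^ 2 : ℝ) : ℂ) = (starRingEnd ℂ) b * b := by
    rw [mul_comm, Complex.mul_conj, Complex.normSq_eq_norm_sq]
  have hA : (Tm w b v).conjTranspose * Tm w b v =
      !![1, (starRingEnd ℂ) w * b; (starRingEnd ℂ) b * w, 1 + (starRingEnd ℂ) b * b] := by
    ext i j
    fin_cases i <;> fin_cases j <;> simp [Tm, Matrix.mul_apply, Fin.sum_univ_two, h1, h2, add_comm]
  rw [hA, hb]
  ext i j
  fin_cases i <;> fin_cases j <;> simp [Matrix.mul_apply, Fin.sum_univ_two]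
  · linear_combination ((starRingEnd ℂ) b * b) * h1
  · ring
  · ring
  · linear_combination ((starRingEnd ℂ) b * b) * h1

lemma mat_zero {wi bi vi wj bj vj : ℂ} {M M' : Matrix (Fin 2) (Fin 2) ℂ}
    (hwi : ‖wi‖ = 1) (hvi : ‖vi‖ = 1) (hwj : ‖wj‖ = 1) (hvj : ‖vj‖ = 1)
    (h1 : M' * Tm wj bj vj = Tm wi bi vi * M)
    (h2 : M * (Tm wj bj vj).conjTranspose = (Tm wi bi vi).conjTranspose * M')
    (hne : ‖bi‖ ^ 2 ≠ ‖bj‖ ^ 2) : M = 0 := by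
  set Ti := Tm wi bi vi with hTi
  set Tj := Tm wj bj vj with hTj
  have hc : (Ti.conjTranspose * Ti) * M = M * (Tj.conjTranspose * Tj) := by
    rw [Matrix.mul_assoc, ← h1, ← Matrix.mul_assoc, ← h2, Matrix.mul_assoc]
  have ci := Tm_CH (b := bi) hwi hvi
  have cj := Tm_CH (b := bj) hwj hvj
  rw [← hTi] at ci
  rw [← hTj] at cj
  set A := Ti.conjTranspose * Ti with hA
  set B := Tj.conjTranspose * Tj
  have h3 : A * A * M = M * (B * B) := by
    rw [Matrix.mul_assoc, hc, ← Matrix.mul_assoc, hc, Matrix.mul_assoc]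
  rw [ci, cj, Matrix.sub_mul, Matrix.mul_sub, Matrix.smul_mul, Matrix.mul_smul, ← hc,
    Matrix.one_mul, Matrix.mul_one, sub_left_inj] at h3
  have h4 : (((‖bi‖ ^ 2 - ‖bj‖ ^ 2 : ℝ)) : ℂ) • (A * M) = 0 := by
    have := sub_eq_zero.2 h3
    rw [← sub_smul] at this
    rw [← this]; congr 1; push_cast; ring
  have h5 : A * M = 0 := by
    rcases smul_eq_zero.1 h4 with h | h
    · exact absurd (sub_eq_zero.1 (by exact_mod_cast h)) hne
    · exact h
  obtain ⟨L, hL, hL'⟩ := Tm_inv (b := bi) hwi hvi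
  have : (L * L.conjTranspose) * A = 1 := by
    rw [hA, Matrix.mul_assoc, ← Matrix.mul_assoc L.conjTranspose, ← Matrix.conjTranspose_mul, hTi,
      hL', Matrix.conjTranspose_one, Matrix.one_mul, hL]
  calc M = (L * L.conjTranspose) * A * M := by rw [this, Matrix.one_mul]
    _ = 0 := by rw [Matrix.mul_assoc, h5, Matrix.mul_zero]

def Mm (P : H2 →L[ℂ] H2) (i j : ℤ) : Matrix (Fin 2) (Fin 2) ℂ :=
  !![inner ℂ (E0 i) (P (E0 j)), inner ℂ (E0 i) (P (E1 j));
     inner ℂ (E1 i) (P (E0 j)), inner ℂ (E1 i) (P (E1 j))]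

section core
variable {A P : H2 →L[ℂ] H2} {w b v : ℤ → ℂ}

lemma Mm_rel1 (h0 : ∀ n, A (E0 n) = w n • E0 (n + 1))
    (h1 : ∀ n, A (E1 n) = b n • E0 (n + 1) + v n • E1 (n + 1))
    (hP : ∀ x, P (A x) = A (P x)) (i j : ℤ) :
    Mm P (i + 1) (j + 1) * Tm (w j) (b j) (v j) = Tm (w i) (b i) (v i) * Mm P i j := by
  have a0 := adj_E0 h0 h1 i
  have a1 := adj_E1 h0 h1 i
  have key : ∀ x y, inner ℂ x (P (A y)) = inner ℂ (ContinuousLinearMap.adjoint A x) (P y) := by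
    intro x y; rw [hP, ContinuousLinearMap.adjoint_inner_left]
  have e00 := key (E0 (i + 1)) (E0 j)
  have e01 := key (E0 (i + 1)) (E1 j)
  have e10 := key (E1 (i + 1)) (E0 j)
  have e11 := key (E1 (i + 1)) (E1 j)
  simp only [a0, a1, h0, h1, map_add, map_smul, inner_add_left, inner_add_right, inner_smul_left,
    inner_smul_right, Complex.conj_conj] at e00 e01 e10 e11
  ext k l
  fin_cases k <;> fin_cases l <;>
    simp only [Mm, Tm, Matrix.mul_apply, Fin.sum_univ_two, Matrix.of_apply, Matrix.cons_val',
      Matrix.cons_val_zero, Matrix.cons_val_one, Matrix.cons_val_fin_one, Fin.zero_eta,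
      Fin.mk_one, Fin.isValue]
  · linear_combination e00
  · linear_combination e01
  · linear_combination e10
  · linear_combination e11

lemma Mm_rel2 (h0 : ∀ n, A (E0 n) = w n • E0 (n + 1))
    (h1 : ∀ n, A (E1 n) = b n • E0 (n + 1) + v n • E1 (n + 1))
    (hP : ∀ x, P (ContinuousLinearMap.adjoint A x) = ContinuousLinearMap.adjoint A (P x))
    (i j : ℤ) :
    Mm P i j * (Tm (w j) (b j) (v j)).conjTranspose =
      (Tm (w i) (b i) (v i)).conjTranspose * Mm P (i + 1) (j + 1) := by
  have a0 := adj_E0 h0 h1 j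
  have a1 := adj_E1 h0 h1 j
  have key : ∀ x y, inner ℂ x (P (ContinuousLinearMap.adjoint A y)) = inner ℂ (A x) (P y) := by
    intro x y; rw [hP, ContinuousLinearMap.adjoint_inner_right]
  have e00 := key (E0 i) (E0 (j + 1))
  have e01 := key (E0 i) (E1 (j + 1))
  have e10 := key (E1 i) (E0 (j + 1))
  have e11 := key (E1 i) (E1 (j + 1))
  simp only [a0, a1, h0, h1, map_add, map_smul, inner_add_left, inner_add_right, inner_smul_left,
    inner_smul_right] at e00 e01 e10 e11
  ext k l
  fin_cases k <;> fin_cases l <;>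
    simp only [Mm, Tm, Matrix.mul_apply, Fin.sum_univ_two, Matrix.of_apply, Matrix.cons_val',
      Matrix.cons_val_zero, Matrix.cons_val_one, Matrix.cons_val_fin_one, Fin.zero_eta,
      Fin.mk_one, Fin.isValue, Matrix.conjTranspose_apply, RCLike.star_def, map_zero]
  · linear_combination e00
  · linear_combination e01
  · linear_combination e10
  · linear_combination e11

lemma mat_scalar {w b v w' b' v' : ℂ} {M M1 M0 : Matrix (Fin 2) (Fin 2) ℂ}
    (hw : ‖w‖ = 1) (hv : ‖v‖ = 1) (hw' : ‖w'‖ = 1) (hv' : ‖v'‖ = 1)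
    (r1 : M1 * Tm w b v = Tm w b v * M)
    (r2 : M * (Tm w b v).conjTranspose = (Tm w b v).conjTranspose * M1)
    (r3 : M * Tm w' b' v' = Tm w' b' v' * M0)
    (r4 : M0 * (Tm w' b' v').conjTranspose = (Tm w' b' v').conjTranspose * M)
    (hb : b ≠ 0) (hb' : b' ≠ 0) (hne : ‖b‖ ^ 2 ≠ ‖b'‖ ^ 2) :
    ∃ c : ℂ, M = c • (1 : Matrix (Fin 2) (Fin 2) ℂ) := by
  have h1 := conj_mul_of_norm hw
  have h2 := conj_mul_of_norm hv
  have h1' := conj_mul_of_norm hw'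
  have h2' := conj_mul_of_norm hv'
  have hA : (Tm w b v).conjTranspose * Tm w b v =
      !![1, (starRingEnd ℂ) w * b; (starRingEnd ℂ) b * w, 1 + (starRingEnd ℂ) b * b] := by
    ext i j
    fin_cases i <;> fin_cases j <;> simp [Tm, Matrix.mul_apply, Fin.sum_univ_two, h1, h2, add_comm]
  have hB : Tm w' b' v' * (Tm w' b' v').conjTranspose =
      !![1 + b' * (starRingEnd ℂ) b', b' * (starRingEnd ℂ) v'; v' * (starRingEnd ℂ) b', 1] := by
    ext i j
    fin_cases i <;> fin_cases j <;>
      simp [Tm, Matrix.mul_apply, Fin.sum_univ_two, mul_comm w', mul_comm v', h1', h2']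
  have cA : ((Tm w b v).conjTranspose * Tm w b v) * M = M * ((Tm w b v).conjTranspose * Tm w b v) := by
    rw [Matrix.mul_assoc, ← r1, ← Matrix.mul_assoc, ← r2, Matrix.mul_assoc]
  have cB : (Tm w' b' v' * (Tm w' b' v').conjTranspose) * M =
      M * (Tm w' b' v' * (Tm w' b' v').conjTranspose) := by
    rw [Matrix.mul_assoc, ← r4, ← Matrix.mul_assoc, ← r3, Matrix.mul_assoc]
  rw [hA] at cA
  rw [hB] at cB
  have a01 := congrFun (congrFun cA 0) 1
  have a10 := congrFun (congrFun cA 1) 0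
  have b01 := congrFun (congrFun cB 0) 1
  simp [Matrix.mul_apply, Fin.sum_univ_two] at a01 a10 b01
  have e1 : -((starRingEnd ℂ) b * M 0 1) = (starRingEnd ℂ) w * (M 0 0 - M 1 1) := by
    apply mul_left_cancel₀ hb; linear_combination a01
  have e2 : (starRingEnd ℂ) b' * M 0 1 = (starRingEnd ℂ) v' * (M 0 0 - M 1 1) := by
    apply mul_left_cancel₀ hb'; linear_combination b01
  have n1 := congrArg norm e1
  have n2 := congrArg norm e2
  simp only [norm_neg, norm_mul, RCLike.norm_conj, hw, hv', one_mul] at n1 n2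
  have hy : M 0 1 = 0 := by
    by_contra h
    have : ‖M 0 1‖ ≠ 0 := norm_ne_zero_iff.2 h
    apply hne
    rw [mul_right_cancel₀ this (n1.trans n2.symm)]
  have hxu : M 0 0 = M 1 1 := by
    rw [hy] at n1
    simp at n1
    exact sub_eq_zero.1 (norm_eq_zero.1 n1.symm)
  have hz : M 1 0 = 0 := by
    have hbb : (starRingEnd ℂ) b * b ≠ 0 := mul_ne_zero (by simpa using hb) hb
    apply mul_left_cancel₀ hbb
    rw [hxu] at a10
    linear_combination a10
  refine ⟨M 1 1, ?_⟩
  ext i j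
  fin_cases i <;> fin_cases j <;> simp [hy, hz, hxu]

lemma Mm_shift_iff (hw : ∀ n, ‖w n‖ = 1) (hv : ∀ n, ‖v n‖ = 1)
    (r1 : ∀ i j, Mm P (i + 1) (j + 1) * Tm (w j) (b j) (v j) = Tm (w i) (b i) (v i) * Mm P i j)
    (i j : ℤ) : Mm P (i + 1) (j + 1) = 0 → Mm P i j = 0 := by
  intro h
  obtain ⟨L, hL, _⟩ := Tm_inv (b := b i) (hw i) (hv i)
  have := r1 i j
  rw [h, Matrix.zero_mul] at this
  calc Mm P i j = L * (Tm (w i) (b i) (v i) * Mm P i j) := by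
        rw [← Matrix.mul_assoc, hL, Matrix.one_mul]
    _ = 0 := by rw [← this, Matrix.mul_zero]

lemma core (hw : ∀ n, ‖w n‖ = 1) (hv : ∀ n, ‖v n‖ = 1)
    (h0 : ∀ n, A (E0 n) = w n • E0 (n + 1))
    (h1 : ∀ n, A (E1 n) = b n • E0 (n + 1) + v n • E1 (n + 1))
    (hP : ∀ x, P (A x) = A (P x))
    (hP' : ∀ x, P (ContinuousLinearMap.adjoint A x) = ContinuousLinearMap.adjoint A (P x))
    (N : ℤ) (hN : ∀ m n : ℤ, N < m → N < n → ‖b m‖ ^ 2 = ‖b n‖ ^ 2 → m = n) :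
    ∃ c : ℂ, P = c • (1 : H2 →L[ℂ] H2) := by
  have r1 := Mm_rel1 h0 h1 hP
  have r2 := Mm_rel2 h0 h1 hP'
  have off : ∀ k : ℕ, ∀ i j : ℤ, N < i + k → N < j + k → i ≠ j → Mm P i j = 0 := by
    intro k
    induction k with
    | zero =>
      intro i j hi hj hij
      exact mat_zero (hw i) (hv i) (hw j) (hv j) (r1 i j) (r2 i j)
        (fun h => hij (hN i j (by simpa using hi) (by simpa using hj) h))
    | succ k ih =>
      intro i j hi hj hij
      apply Mm_shift_iff hw hv r1
      apply ih
      · push_cast at hi; omega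
      · push_cast at hj; omega
      · omega
  have off' : ∀ i j : ℤ, i ≠ j → Mm P i j = 0 := by
    intro i j hij
    apply off ((N - i).natAbs + (N - j).natAbs + 1) i j _ _ hij <;> omega
  obtain ⟨n, hn, hb1, hb2⟩ : ∃ n : ℤ, N < n ∧ b (n + 1) ≠ 0 ∧ b n ≠ 0 := by
    by_cases h : ∃ m, N < m ∧ b m = 0
    · obtain ⟨m, hm, hbm⟩ := h
      refine ⟨m + 1, by omega, fun h => ?_, fun h => ?_⟩
      · have := hN m (m + 1 + 1) hm (by omega) (by rw [hbm, h]); omega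
      · have := hN m (m + 1) hm (by omega) (by rw [hbm, h]); omega
    · push Not at h
      exact ⟨N + 1, by omega, h _ (by omega), h _ (by omega)⟩
  obtain ⟨c, hc⟩ := mat_scalar (hw (n + 1)) (hv (n + 1)) (hw n) (hv n) (r1 (n + 1) (n + 1))
    (r2 (n + 1) (n + 1)) (r1 n n) (r2 n n) hb1 hb2
    (fun h => by have := hN _ _ (by omega) hn h; omega)
  have up : ∀ i, Mm P i i = c • (1 : Matrix (Fin 2) (Fin 2) ℂ) →
      Mm P (i + 1) (i + 1) = c • (1 : Matrix (Fin 2) (Fin 2) ℂ) := by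
    intro i hi
    obtain ⟨L, _, hL⟩ := Tm_inv (b := b i) (hw i) (hv i)
    have h := r1 i i
    calc Mm P (i + 1) (i + 1) = Mm P (i + 1) (i + 1) * Tm (w i) (b i) (v i) * L := by
          rw [Matrix.mul_assoc, hL, Matrix.mul_one]
      _ = _ := by rw [h, hi]; simp [hL]
  have down : ∀ i, Mm P (i + 1) (i + 1) = c • (1 : Matrix (Fin 2) (Fin 2) ℂ) →
      Mm P i i = c • (1 : Matrix (Fin 2) (Fin 2) ℂ) := by
    intro i hi
    obtain ⟨L, hL, _⟩ := Tm_inv (b := b i) (hw i) (hv i)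
    have h := r1 i i
    calc Mm P i i = L * (Tm (w i) (b i) (v i) * Mm P i i) := by
          rw [← Matrix.mul_assoc, hL, Matrix.one_mul]
      _ = _ := by rw [← h, hi]; simp [hL]
  have diag : ∀ i, Mm P i i = c • (1 : Matrix (Fin 2) (Fin 2) ℂ) := by
    intro i
    refine Int.inductionOn' i (n + 1) hc (fun k _ => up k)
      (fun k _ ih => down _ (by simpa using ih))
  have all : ∀ i j, Mm P i j = if i = j then c • (1 : Matrix (Fin 2) (Fin 2) ℂ) else 0 := by
    intro i j
    split_ifs with h
    · rw [h, diag]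
    · exact off' i j h
  refine ⟨c, h2_clm_ext ?_ ?_⟩ <;> intro j <;> apply h2_ext <;> intro i
  · have := congrFun (congrFun (all i j) 0) 0
    rw [show (c • (1 : H2 →L[ℂ] H2)) (E0 j) = c • E0 j from rfl, inner_smul_right, inner_E00]
    refine Eq.trans this ?_
    split_ifs <;> simp
  · have := congrFun (congrFun (all i j) 1) 0
    rw [show (c • (1 : H2 →L[ℂ] H2)) (E0 j) = c • E0 j from rfl, inner_smul_right, inner_E10]
    refine Eq.trans this ?_
    split_ifs <;> simp
  · have := congrFun (congrFun (all i j) 0) 1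
    rw [show (c • (1 : H2 →L[ℂ] H2)) (E1 j) = c • E1 j from rfl, inner_smul_right, inner_E01]
    refine Eq.trans this ?_
    split_ifs <;> simp
  · have := congrFun (congrFun (all i j) 1) 1
    rw [show (c • (1 : H2 →L[ℂ] H2)) (E1 j) = c • E1 j from rfl, inner_smul_right, inner_E11]
    refine Eq.trans this ?_
    split_ifs <;> simp

lemma irr_of_core (hw : ∀ n, ‖w n‖ = 1) (hv : ∀ n, ‖v n‖ = 1)
    (h0 : ∀ n, A (E0 n) = w n • E0 (n + 1))
    (h1 : ∀ n, A (E1 n) = b n • E0 (n + 1) + v n • E1 (n + 1))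
    (N : ℤ) (hN : ∀ m n : ℤ, N < m → N < n → ‖b m‖ ^ 2 = ‖b n‖ ^ 2 → m = n) :
    IsIrreducibleOp A := by
  intro K hK hA hA'
  have : CompleteSpace K := hK.completeSpace_coe
  have gen : ∀ B : H2 →L[ℂ] H2, (∀ x ∈ K, B x ∈ K) →
      (∀ x ∈ K, ContinuousLinearMap.adjoint B x ∈ K) →
      ∀ x, K.starProjection (B x) = B (K.starProjection x) := by
    intro B hB hB' x
    apply Submodule.eq_starProjection_of_mem_of_inner_eq_zero
    · exact hB _ (Submodule.starProjection_apply_mem K x)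
    · intro y hy
      rw [← map_sub, ← ContinuousLinearMap.adjoint_inner_right]
      exact Submodule.starProjection_inner_eq_zero x _ (hB' y hy)
  obtain ⟨c, hc⟩ := core hw hv h0 h1 (gen A hA hA')
    (gen _ hA' (by simpa using hA)) N hN
  by_cases h : K = ⊥
  · exact Or.inl h
  · right
    obtain ⟨x, hx, hx0⟩ := Submodule.exists_mem_ne_zero_of_ne_bot h
    have h2 := Submodule.starProjection_eq_self_iff.2 hx
    rw [hc] at h2
    have h3 : c • x = (1 : ℂ) • x := by rw [one_smul]; exact h2
    have hc1 : c = 1 := smul_left_injective ℂ hx0 h3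
    rw [eq_top_iff]
    intro y _
    rw [← Submodule.starProjection_eq_self_iff, hc, hc1]; simp
end core

/-! ### Weak homogeneity -/

section wh
variable {E : Type*} [NormedAddCommGroup E] [InnerProductSpace ℂ E] [CompleteSpace E]

/-- `U` is a bilateral shift with wandering unit vector `e`. -/
def BS (U : E →L[ℂ] E) (e : E) : Prop :=
  U ∈ unitary (E →L[ℂ] E) ∧ ‖e‖ = 1 ∧ (∀ n : ℕ, inner ℂ ((U ^ (n + 1)) e) e = 0) ∧
  ∀ K : Submodule ℂ E, IsClosed (K : Set E) → e ∈ K → (∀ x ∈ K, U x ∈ K) →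
    (∀ x ∈ K, (star U) x ∈ K) → K = ⊤

lemma BS.basis {U : E →L[ℂ] E} {e : E} (h : BS U e) :
    ∃ B : HilbertBasis ℤ ℂ E, ∀ n, U (B n) = B (n + 1) := by
  obtain ⟨hU, he, ho, ht⟩ := h
  let V : unitary (E →L[ℂ] E) := ⟨U, hU⟩
  let f : ℤ → E := fun n => ((V ^ n : unitary (E →L[ℂ] E)) : E →L[ℂ] E) e
  have hUf : ∀ n, U (f n) = f (n + 1) := by
    intro n
    simp only [f]
    rw [add_comm, zpow_one_add]; rfl
  have hUf' : ∀ n, (star U) (f n) = f (n - 1) := by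
    intro n
    simp only [f]
    rw [sub_eq_add_neg, add_comm, zpow_add, zpow_neg_one]; rfl
  have iso : ∀ (W : unitary (E →L[ℂ] E)) (x y : E),
      inner ℂ ((W : E →L[ℂ] E) x) ((W : E →L[ℂ] E) y) = inner ℂ x y := by
    intro W x y
    rw [← ContinuousLinearMap.adjoint_inner_right]
    have : (star (W : E →L[ℂ] E)) * (W : E →L[ℂ] E) = 1 := W.2.1
    have := DFunLike.congr_fun this y
    rw [ContinuousLinearMap.star_eq_adjoint] at this
    exact congrArg (inner ℂ x) this
  have fs : ∀ m k : ℤ, f (m + k) = ((V ^ m : unitary (E →L[ℂ] E)) : E →L[ℂ] E) (f k) := by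
    intro m k
    simp only [f]
    rw [zpow_add]; rfl
  have pos : ∀ (m : ℤ) (k : ℕ), inner ℂ (f (m + (k + 1 : ℕ))) (f m) = 0 := by
    intro m k
    have : f m = f (m + 0) := by simp
    rw [this, fs, fs m 0, iso]
    have h0 : f 0 = e := by simp [f]
    have h1 : f ((k + 1 : ℕ) : ℤ) = (U ^ (k + 1)) e := by
      simp only [f]; rw [zpow_natCast]; rfl
    rw [h0, h1, ho]
  have orth : Orthonormal ℂ f := by
    constructor
    · intro n
      have : f n = f (n + 0) := by simp
      have h2 := iso (V ^ n) (f 0) (f 0)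
      rw [← fs] at h2
      have h0 : f 0 = e := by simp [f]
      rw [h0, add_zero, inner_self_eq_norm_sq_to_K, inner_self_eq_norm_sq_to_K, he] at h2
      have h3 : ‖f n‖ ^ 2 = 1 ^ 2 := Complex.ofReal_injective (by push_cast; exact h2)
      exact (sq_eq_sq₀ (norm_nonneg _) zero_le_one).1 h3
    · intro m n hmn
      rcases lt_or_gt_of_ne hmn with h | h
      · have := pos m (n - m - 1).toNat
        rw [show m + (((n - m - 1).toNat + 1 : ℕ) : ℤ) = n by omega] at this
        rw [← inner_conj_symm, this, map_zero]
      · have := pos n (m - n - 1).toNat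
        rw [show n + (((m - n - 1).toNat + 1 : ℕ) : ℤ) = m by omega] at this
        exact this
  have inv : ∀ W : E →L[ℂ] E, (∀ n, ∃ m, W (f n) = f m) →
      ∀ x ∈ (Submodule.span ℂ (Set.range f)).topologicalClosure,
        W x ∈ (Submodule.span ℂ (Set.range f)).topologicalClosure := by
    intro W hW
    have : (Submodule.span ℂ (Set.range f)).topologicalClosure ≤
        ((Submodule.span ℂ (Set.range f)).topologicalClosure).comap W.toLinearMap := by
      apply Submodule.topologicalClosure_minimal
      · rw [Submodule.span_le]
        rintro _ ⟨n, rfl⟩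
        obtain ⟨m, hm⟩ := hW n
        apply Submodule.le_topologicalClosure
        change W (f n) ∈ _
        rw [hm]
        exact Submodule.subset_span ⟨m, rfl⟩
      · exact (Submodule.isClosed_topologicalClosure _).preimage W.continuous
    exact this
  have top : (Submodule.span ℂ (Set.range f)).topologicalClosure = ⊤ := by
    apply ht _ (Submodule.isClosed_topologicalClosure _)
    · apply Submodule.le_topologicalClosure
      exact Submodule.subset_span ⟨0, by simp [f]⟩
    · exact inv U fun n => ⟨_, hUf n⟩
    · exact inv _ fun n => ⟨_, hUf' n⟩
  refine ⟨HilbertBasis.mk orth top.ge, fun n => ?_⟩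
  rw [HilbertBasis.coe_mk]
  exact hUf n

lemma BS.similar {U V : E →L[ℂ] E} {e f : E} (hU : BS U e) (hV : BS V f) : SimilarOp U V := by
  obtain ⟨B, hB⟩ := hU.basis
  obtain ⟨C, hC⟩ := hV.basis
  let S : E ≃L[ℂ] E := (B.repr.trans C.repr.symm).toContinuousLinearEquiv
  have hS : ∀ n, S (B n) = C n := by
    intro n; simp [S, HilbertBasis.repr_self]
  refine ⟨⟨S.toContinuousLinearMap, S.symm.toContinuousLinearMap, ?_, ?_⟩, ?_⟩
  · ext x; simp
  · ext x; simp
  · apply ContinuousLinearMap.ext_on (s := Set.range B)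
    · have := B.dense_span
      rw [Submodule.dense_iff_topologicalClosure_eq_top]; exact this
    · rintro _ ⟨n, rfl⟩
      simp [hB, hS, hC]

lemma closed_inv_inverse (K : Submodule ℂ E) (hK : IsClosed (K : Set E)) (A : E →L[ℂ] E)
    (hA : ‖A‖ < 1) (h : ∀ x ∈ K, A x ∈ K) : ∀ x ∈ K, Ring.inverse (1 - A) x ∈ K := by
  intro x hx
  have hs : HasSum (fun n : ℕ => A ^ n) (Ring.inverse (1 - A)) := by
    rw [NormedRing.inverse_one_sub A hA]
    exact (summable_geometric_of_norm_lt_one hA).hasSum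
  have h2 := (ContinuousLinearMap.apply ℂ E x).hasSum hs
  refine hK.mem_of_tendsto h2 (Filter.Eventually.of_forall fun s => K.sum_mem fun n _ => ?_)
  change (A ^ n) x ∈ K
  clear * - hx h
  induction n with
  | zero => simpa using hx
  | succ n ih => rw [pow_succ']; exact h _ ih

lemma unitary_norm_le {U : E →L[ℂ] E} (hU : U ∈ unitary (E →L[ℂ] E)) : ‖U‖ ≤ 1 := by
  refine ContinuousLinearMap.opNorm_le_bound _ zero_le_one fun x => ?_
  have h := DFunLike.congr_fun hU.1 x
  rw [one_mul]
  have h2 : inner ℂ (U x) (U x) = inner ℂ x x := by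
    rw [← ContinuousLinearMap.adjoint_inner_right]
    exact congrArg (inner ℂ x) h
  rw [inner_self_eq_norm_sq_to_K, inner_self_eq_norm_sq_to_K] at h2
  have h3 : ‖U x‖ ^ 2 = ‖x‖ ^ 2 := Complex.ofReal_injective (by push_cast; exact h2)
  exact ((sq_eq_sq₀ (norm_nonneg _) (norm_nonneg _)).1 h3).le

lemma norm_smul_unitary_lt {U : E →L[ℂ] E} (hU : U ∈ unitary (E →L[ℂ] E)) {a : ℂ}
    (ha : ‖a‖ < 1) : ‖a • U‖ < 1 := by
  rw [norm_smul]
  have := unitary_norm_le hU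
  have := norm_nonneg U
  have := norm_nonneg a
  nlinarith

lemma isUnit_one_sub_smul {U : E →L[ℂ] E} (hU : U ∈ unitary (E →L[ℂ] E)) {a : ℂ}
    (ha : ‖a‖ < 1) : IsUnit (1 - a • U) :=
  ⟨Units.oneSub _ (norm_smul_unitary_lt hU ha), rfl⟩

lemma BS.mobius {U : E →L[ℂ] E} {e : E} (h : BS U e) (θ : ℝ) {a : ℂ} (ha : ‖a‖ < 1) :
    ∃ k, BS (mobiusOp θ a U) k := by
  obtain ⟨hU, he, ho, ht⟩ := h
  have ha' : ‖(starRingEnd ℂ) a‖ < 1 := by simpa using ha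
  have uQ := isUnit_one_sub_smul hU ha'
  have hUU : star U * U = 1 := hU.1
  have hUU' : U * star U = 1 := hU.2
  set c : ℂ := Complex.exp (θ * Complex.I) with hc
  have hcn : ‖c‖ = 1 := Complex.norm_exp_ofReal_mul_I θ
  have hcc : (starRingEnd ℂ) c * c = 1 := conj_mul_of_norm hcn
  set Q : E →L[ℂ] E := 1 - (starRingEnd ℂ) a • U with hQ
  set G : E →L[ℂ] E := Ring.inverse Q with hG
  set R : E →L[ℂ] E := U - a • (1 : E →L[ℂ] E) with hR
  have hQG : Q * G = 1 := Ring.mul_inverse_cancel _ uQ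
  have hGQ : G * Q = 1 := Ring.inverse_mul_cancel _ uQ
  set V : E →L[ℂ] E := mobiusOp θ a U with hV
  have hVd : V = c • (R * G) := rfl
  have sR : star R = star U - (starRingEnd ℂ) a • (1 : E →L[ℂ] E) := by
    rw [hR, star_sub, star_smul, star_one]; rfl
  have sQ : star Q = 1 - a • star U := by
    rw [hQ, star_sub, star_smul, star_one]; simp
  have rr1 : star R * R = star Q * Q := by
    rw [sR, sQ, hR, hQ]
    simp only [sub_mul, mul_sub, smul_mul_assoc, mul_smul_comm, one_mul, mul_one, hUU]
    simp only [smul_sub, smul_smul, mul_comm a]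
    abel
  have rr2 : R * star R = Q * star Q := by
    rw [sR, sQ, hR, hQ]
    simp only [sub_mul, mul_sub, smul_mul_assoc, mul_smul_comm, one_mul, mul_one, hUU']
    simp only [smul_sub, smul_smul, mul_comm a]
    abel
  have hRQ : R * Q = Q * R := by
    rw [hR, hQ]
    simp only [sub_mul, mul_sub, smul_mul_assoc, mul_smul_comm, one_mul, mul_one]
    simp only [smul_sub, smul_smul, mul_comm a]
    abel
  have hRG : R * G = G * R := by
    calc R * G = G * (Q * R) * G := by rw [← mul_assoc, hGQ, one_mul]
      _ = G * R := by rw [← hRQ, mul_assoc, mul_assoc, hQG, mul_one]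
  have hGQs : star G * star Q = 1 := by rw [← star_mul, hQG, star_one]
  have hQGs : star Q * star G = 1 := by rw [← star_mul, hGQ, star_one]
  have hVs : star V = (starRingEnd ℂ) c • (star G * star R) := by
    rw [hVd, star_smul, star_mul]; rfl
  have hVV : star V * V = 1 := by
    rw [hVs, hVd, smul_mul_smul_comm, hcc, one_smul]
    calc star G * star R * (R * G) = star G * (star R * R) * G := by noncomm_ring
      _ = (star G * star Q) * (Q * G) := by rw [rr1]; noncomm_ring
      _ = 1 := by rw [hGQs, hQG, one_mul]
  have hVV' : V * star V = 1 := by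
    rw [hVs, hVd, smul_mul_smul_comm, mul_comm c, hcc, one_smul, hRG]
    calc G * R * (star G * star R) = G * R * star (R * G) := by rw [star_mul]
      _ = G * (R * star R) * star G := by rw [hRG, star_mul]; noncomm_ring
      _ = (G * Q) * (star Q * star G) := by rw [rr2]; noncomm_ring
      _ = 1 := by rw [hGQ, hQGs, one_mul]
  have hVu : V ∈ unitary (E →L[ℂ] E) := ⟨hVV, hVV'⟩

  let Kp : Submodule ℂ E :=
    ⨅ n : ℕ, LinearMap.ker (innerSL ℂ (((star U) ^ (n + 1)) e)).toLinearMap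
  have memKp : ∀ x, x ∈ Kp ↔ ∀ n : ℕ, inner ℂ (((star U) ^ (n + 1)) e) x = 0 := by
    intro x; simp [Kp, Submodule.mem_iInf]
  have clKp : IsClosed (Kp : Set E) := by
    simp only [Kp, Submodule.coe_iInf]
    exact isClosed_iInter fun n => (innerSL ℂ (((star U) ^ (n + 1)) e)).isClosed_ker
  have adj : ∀ x y, inner ℂ ((star U) x) y = inner ℂ x (U y) := by
    intro x y
    rw [ContinuousLinearMap.star_eq_adjoint, ContinuousLinearMap.adjoint_inner_left]
  have UKp : ∀ x ∈ Kp, U x ∈ Kp := by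
    intro x hx
    rw [memKp] at hx ⊢
    intro n
    rw [← adj]
    have := hx (n + 1)
    rwa [pow_succ'] at this
  have eKp : e ∈ Kp := by
    rw [memKp]
    intro n
    have : ∀ (m : ℕ) x y, inner ℂ (((star U) ^ m) x) y = inner ℂ x ((U ^ m) y) := by
      intro m
      induction m with
      | zero => intro x y; simp
      | succ m ih =>
        intro x y
        rw [pow_succ', pow_succ]
        change inner ℂ ((star U) (((star U) ^ m) x)) y = inner ℂ x ((U ^ m) (U y))
        rw [adj, ih]
    rw [this, ← inner_conj_symm, ho, map_zero]
  have GKp : ∀ x ∈ Kp, G x ∈ Kp :=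
    closed_inv_inverse Kp clKp _ (norm_smul_unitary_lt hU ha') fun x hx => Kp.smul_mem _ (UKp x hx)
  have VKp : ∀ x ∈ Kp, V x ∈ Kp := by
    intro x hx
    have : V x = c • (U (G x) - a • G x) := by rw [hVd]; simp [hR]
    rw [this]
    exact Kp.smul_mem _ (Kp.sub_mem (UKp _ (GKp _ hx)) (Kp.smul_mem _ (GKp _ hx)))
  have VnKp : ∀ n : ℕ, ∀ x ∈ Kp, (V ^ n) x ∈ Kp := by
    intro n
    induction n with
    | zero => intro x hx; simpa using hx
    | succ n ih => intro x hx; rw [pow_succ']; exact VKp _ (ih x hx)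
  have hRsG : (star R * G) = star U := by
    have : star R = star U * Q := by
      rw [sR, hQ, mul_sub, mul_smul_comm, hUU, mul_one]
    rw [this, mul_assoc, hQG, mul_one]
  have orth : ∀ n : ℕ, inner ℂ ((V ^ (n + 1)) (G e)) (G e) = 0 := by
    intro n
    set y := G ((V ^ n) (G e)) with hy
    have hyK : y ∈ Kp := GKp _ (VnKp n _ (GKp _ eKp))
    have : (V ^ (n + 1)) (G e) = c • R y := by
      rw [pow_succ']
      change V ((V ^ n) (G e)) = _
      rw [hVd]; rfl
    rw [this, inner_smul_left]
    have h2 : inner ℂ (R y) (G e) = inner ℂ y ((star R * G) e) := by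
      change _ = inner ℂ y ((star R) (G e))
      rw [ContinuousLinearMap.star_eq_adjoint, ContinuousLinearMap.adjoint_inner_right]
    rw [h2, hRsG, ← inner_conj_symm]
    have h3 := (memKp y).1 hyK 0
    simp only [zero_add, pow_one] at h3
    rw [h3]; simp
  have hGe : G e ≠ 0 := by
    intro h0
    have : (Q * G) e = 0 := by
      change Q (G e) = 0
      rw [h0, map_zero]
    rw [hQG] at this
    have : e = 0 := this
    rw [this] at he; simp at he
  have hr : ((‖G e‖⁻¹ : ℝ) : ℂ) ≠ 0 := by
    simpa using hGe
  refine ⟨((‖G e‖⁻¹ : ℝ) : ℂ) • G e, hVu, ?_, ?_, ?_⟩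
  · rw [norm_smul, Complex.norm_real, norm_inv, norm_norm]
    exact inv_mul_cancel₀ (norm_ne_zero_iff.2 hGe)
  · intro n
    rw [map_smul, inner_smul_left, inner_smul_right, orth]; simp
  · intro K hK hk hKV hKV'
    have hk1 : G e ∈ K := by
      have := K.smul_mem (((‖G e‖⁻¹ : ℝ) : ℂ)⁻¹) hk
      rwa [smul_smul, inv_mul_cancel₀ hr, one_smul] at this
    set b : ℂ := -((starRingEnd ℂ) a * (starRingEnd ℂ) c) with hb
    have hbn : ‖b‖ < 1 := by simp [hb, hcn, ha]
    have hbn' : ‖(starRingEnd ℂ) b‖ < 1 := by simpa using hbn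
    have hVQ : V * Q = c • R := by
      rw [hVd, smul_mul_assoc, mul_assoc, hGQ, mul_one]
    have hVs_u : star V ∈ unitary (E →L[ℂ] E) := ⟨by simpa using hVV', by simpa using hVV⟩
    have u1 := isUnit_one_sub_smul hVu hbn
    have u2 := isUnit_one_sub_smul hVs_u hbn'
    have hcom : U * V = V * U := by
      have hUR : U * R = R * U := by
        rw [hR]; simp only [sub_mul, mul_sub, smul_mul_assoc, mul_smul_comm, one_mul, mul_one]
      have hUQ : U * Q = Q * U := by
        rw [hQ]; simp only [sub_mul, mul_sub, smul_mul_assoc, mul_smul_comm, one_mul, mul_one]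
      have hUG : U * G = G * U := by
        calc U * G = G * (Q * U) * G := by rw [← mul_assoc, hGQ, one_mul]
          _ = G * U := by rw [← hUQ, mul_assoc, mul_assoc, hQG, mul_one]
      rw [hVd, mul_smul_comm, smul_mul_assoc, ← mul_assoc, hUR, mul_assoc, hUG, mul_assoc]
    have eqU : (1 - b • V) * U = (starRingEnd ℂ) c • V + a • (1 : E →L[ℂ] E) := by
      have h1 : (starRingEnd ℂ) c • (V * Q) = R := by rw [hVQ, smul_smul, hcc, one_smul]
      rw [hQ, hR, mul_sub, mul_one, mul_smul_comm] at h1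
      rw [sub_mul, one_mul, smul_mul_assoc, hb, neg_smul, sub_neg_eq_add]
      have : U = a • (1 : E →L[ℂ] E) + (starRingEnd ℂ) c • (V - (starRingEnd ℂ) a • (V * U)) := by
        rw [h1]; abel
      nth_rewrite 1 [this]
      rw [smul_sub, smul_smul, mul_comm ((starRingEnd ℂ) c)]
      abel
    have eqUs : (1 - (starRingEnd ℂ) b • star V) * star U =
        c • star V + (starRingEnd ℂ) a • (1 : E →L[ℂ] E) := by
      have h0 : U * (1 - b • V) = (starRingEnd ℂ) c • V + a • (1 : E →L[ℂ] E) := by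
        rw [← eqU, mul_sub, sub_mul, mul_smul_comm, hcom, smul_mul_assoc, one_mul, mul_one]
      have := congrArg star h0
      rw [star_mul, star_sub, star_one, star_smul, star_add, star_smul, star_smul, star_one] at this
      simpa using this
    have KU : ∀ x ∈ K, U x ∈ K := by
      intro x hx
      have hU2 : U = Ring.inverse (1 - b • V) * ((starRingEnd ℂ) c • V + a • (1 : E →L[ℂ] E)) := by
        rw [← eqU, Ring.inverse_mul_cancel_left _ _ u1]
      rw [hU2]
      refine closed_inv_inverse K hK _ (norm_smul_unitary_lt hVu hbn)
        (fun x hx => K.smul_mem _ (hKV x hx)) _ ?_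
      exact K.add_mem (K.smul_mem _ (hKV x hx)) (K.smul_mem _ hx)
    have KUs : ∀ x ∈ K, (star U) x ∈ K := by
      intro x hx
      have hU2 : star U = Ring.inverse (1 - (starRingEnd ℂ) b • star V) *
          (c • star V + (starRingEnd ℂ) a • (1 : E →L[ℂ] E)) := by
        rw [← eqUs, Ring.inverse_mul_cancel_left _ _ u2]
      rw [hU2]
      refine closed_inv_inverse K hK _ (norm_smul_unitary_lt hVs_u hbn')
        (fun x hx => K.smul_mem _ (hKV' x hx)) _ ?_
      exact K.add_mem (K.smul_mem _ (hKV' x hx)) (K.smul_mem _ hx)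
    apply ht K hK _ KU KUs
    have : e = G e - (starRingEnd ℂ) a • U (G e) := by
      have := DFunLike.congr_fun hQG e
      exact this.symm
    rw [this]
    exact K.sub_mem hk1 (K.smul_mem _ (KU _ hk1))
end wh

lemma BS_shift {w : ℤ → ℂ} (hw : ∀ n, ‖w n‖ = 1) {T : Hl →L[ℂ] Hl}
    (hT : ∀ n : ℤ, T (eb n) = w n • eb (n + 1)) : BS T (eb 0) := by
  have hs : ∀ n, (star T) (eb (n + 1)) = (starRingEnd ℂ) (w n) • eb n := by
    intro n
    apply hl_ext
    intro m
    rw [ContinuousLinearMap.star_eq_adjoint, ContinuousLinearMap.adjoint_inner_right, hT,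
      inner_smul_left, inner_smul_right, inner_eb_eb, inner_eb_eb]
    simp only [add_left_inj]
    split_ifs with h <;> simp [h]
  have h1 : star T * T = 1 := by
    apply hl_clm_ext
    intro n
    change (star T) (T (eb n)) = eb n
    rw [hT, map_smul, hs, smul_smul, mul_comm, conj_mul_of_norm (hw n), one_smul]
  have h2 : T * star T = 1 := by
    apply hl_clm_ext
    intro n
    obtain ⟨m, rfl⟩ : ∃ m, n = m + 1 := ⟨n - 1, by ring⟩
    change T ((star T) (eb (m + 1))) = eb (m + 1)
    rw [hs, map_smul, hT, smul_smul, conj_mul_of_norm (hw m), one_smul]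
  refine ⟨⟨h1, h2⟩, norm_eb 0, ?_, ?_⟩
  · intro n
    have : ∀ m : ℕ, ∃ c : ℂ, (T ^ m) (eb 0) = c • eb m := by
      intro m
      induction m with
      | zero => exact ⟨1, by simp⟩
      | succ m ih =>
        obtain ⟨c, hc⟩ := ih
        refine ⟨c * w m, ?_⟩
        rw [pow_succ']
        change T ((T ^ m) (eb 0)) = _
        rw [hc, map_smul, hT, smul_smul]; push_cast; rfl
    obtain ⟨c, hc⟩ := this (n + 1)
    rw [hc, inner_smul_left, inner_eb_eb, if_neg (by omega), mul_zero]
  · intro K hK h0 hKT hKT'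
    apply hl_closed_top K hK
    intro n
    refine Int.inductionOn' n 0 h0 (fun k _ ih => ?_) (fun k _ ih => ?_)
    · have := K.smul_mem ((starRingEnd ℂ) (w k)) (hKT _ ih)
      rwa [hT, smul_smul, conj_mul_of_norm (hw k), one_smul] at this
    · have h3 := hs (k - 1)
      rw [sub_add_cancel] at h3
      have := K.smul_mem (w (k - 1)) (hKT' _ ih)
      rwa [h3, smul_smul, mul_comm, conj_mul_of_norm (hw (k - 1)), one_smul] at this

section sim
variable {E : Type*} [NormedAddCommGroup E] [NormedSpace ℂ E]

lemma SimilarOp.symm' {A B : E →L[ℂ] E} (h : SimilarOp A B) : SimilarOp B A := by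
  obtain ⟨S, hS⟩ := h
  refine ⟨S⁻¹, ?_⟩
  rw [Units.inv_mul_eq_iff_eq_mul, ← mul_assoc, hS, mul_assoc, Units.mul_inv, mul_one]

lemma SimilarOp.trans' {A B C : E →L[ℂ] E} (h : SimilarOp A B) (h' : SimilarOp B C) :
    SimilarOp A C := by
  obtain ⟨S, hS⟩ := h
  obtain ⟨R, hR⟩ := h'
  refine ⟨R * S, ?_⟩
  rw [Units.val_mul, mul_assoc, hS, ← mul_assoc, hR, mul_assoc]

lemma SimilarOp.mobius' {A B : E →L[ℂ] E} (h : SimilarOp A B) (θ : ℝ) (a : ℂ) :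
    SimilarOp (mobiusOp θ a A) (mobiusOp θ a B) := by
  obtain ⟨S, hS⟩ := h
  have hA : A = ↑S⁻¹ * (B * S) := by rw [← hS, Units.inv_mul_cancel_left]
  have hlin : ∀ z y : ℂ, (S : E →L[ℂ] E) * (z • A - y • (1 : E →L[ℂ] E)) =
      (z • B - y • (1 : E →L[ℂ] E)) * S := by
    intro z y
    rw [mul_sub, sub_mul, mul_smul_comm, hS, smul_mul_assoc, mul_smul_comm, smul_mul_assoc,
      mul_one, one_mul]
  have e1 := hlin 1 a
  rw [one_smul, one_smul] at e1
  have e2 : (S : E →L[ℂ] E) * (1 - (starRingEnd ℂ) a • A) = (1 - (starRingEnd ℂ) a • B) * S := by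
    have := hlin (-(starRingEnd ℂ) a) (-1)
    rw [neg_smul, neg_smul, neg_smul, one_smul] at this
    rw [show (1 - (starRingEnd ℂ) a • A) = -((starRingEnd ℂ) a • A) - -1 by abel, this]
    congr 1; abel
  have e3 : (S : E →L[ℂ] E) * Ring.inverse (1 - (starRingEnd ℂ) a • A) =
      Ring.inverse (1 - (starRingEnd ℂ) a • B) * S := by
    have := congrArg Ring.inverse e2
    rw [Ring.inverse_mul (Or.inl S.isUnit), Ring.inverse_mul (Or.inr S.isUnit), Ring.inverse_unit]
      at this
    rw [← Units.mul_inv_eq_iff_eq_mul, mul_assoc, this, Units.mul_inv_cancel_left]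
  refine ⟨S, ?_⟩
  unfold mobiusOp
  rw [mul_smul_comm, smul_mul_assoc, ← mul_assoc, e1, mul_assoc, e3, mul_assoc]
end sim

/-- block diagonal operators -/
def Dg (A B : Hl →L[ℂ] Hl) : H2 →L[ℂ] H2 :=
  let L := WithLp.prodContinuousLinearEquiv 2 ℂ Hl Hl
  (L.symm.toContinuousLinearMap).comp ((A.prodMap B).comp L.toContinuousLinearMap)

lemma Dg_mul (A B A' B' : Hl →L[ℂ] Hl) : Dg A B * Dg A' B' = Dg (A * A') (B * B') := by
  ext1 x; apply WithLp.ofLp_injective; simp [Dg]; try rfl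
lemma Dg_one : Dg 1 1 = 1 := by
  ext1 x; apply WithLp.ofLp_injective; simp [Dg]; try rfl
lemma Dg_sub (A B A' B' : Hl →L[ℂ] Hl) : Dg A B - Dg A' B' = Dg (A - A') (B - B') := by
  ext1 x; apply WithLp.ofLp_injective; simp [Dg]; try rfl
lemma Dg_smul (c : ℂ) (A B : Hl →L[ℂ] Hl) : c • Dg A B = Dg (c • A) (c • B) := by
  ext1 x; apply WithLp.ofLp_injective; simp [Dg]; try rfl

lemma Dg_inverse {A B : Hl →L[ℂ] Hl} (hA : IsUnit A) (hB : IsUnit B) :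
    IsUnit (Dg A B) ∧ Ring.inverse (Dg A B) = Dg (Ring.inverse A) (Ring.inverse B) := by
  have h1 : Dg A B * Dg (Ring.inverse A) (Ring.inverse B) = 1 := by
    rw [Dg_mul, Ring.mul_inverse_cancel _ hA, Ring.mul_inverse_cancel _ hB, Dg_one]
  have h2 : Dg (Ring.inverse A) (Ring.inverse B) * Dg A B = 1 := by
    rw [Dg_mul, Ring.inverse_mul_cancel _ hA, Ring.inverse_mul_cancel _ hB, Dg_one]
  let u : (H2 →L[ℂ] H2)ˣ := ⟨_, _, h1, h2⟩
  exact ⟨u.isUnit, Ring.inverse_unit u⟩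

lemma Dg_similar {A B A' B' : Hl →L[ℂ] Hl} (h : SimilarOp A A') (h' : SimilarOp B B') :
    SimilarOp (Dg A B) (Dg A' B') := by
  obtain ⟨S, hS⟩ := h
  obtain ⟨R, hR⟩ := h'
  refine ⟨⟨Dg S R, Dg ↑S⁻¹ ↑R⁻¹, ?_, ?_⟩, ?_⟩
  · rw [Dg_mul, Units.mul_inv, Units.mul_inv, Dg_one]
  · rw [Dg_mul, Units.inv_mul, Units.inv_mul, Dg_one]
  · change Dg S R * Dg A B = Dg A' B' * Dg S R
    rw [Dg_mul, Dg_mul, hS, hR]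

/-- the operator matrix `[[1, Y], [0, 1]]` -/
def Sh (Y : Hl →L[ℂ] Hl) : H2 →L[ℂ] H2 :=
  let L := WithLp.prodContinuousLinearEquiv 2 ℂ Hl Hl
  (L.symm.toContinuousLinearMap).comp
    (((ContinuousLinearMap.fst ℂ Hl Hl + Y.comp (ContinuousLinearMap.snd ℂ Hl Hl)).prod
      (ContinuousLinearMap.snd ℂ Hl Hl)).comp L.toContinuousLinearMap)

lemma blockT_similar (T0 T1 X : Hl →L[ℂ] Hl) : SimilarOp (Dg T0 T1) (blockT T0 T1 X) := by
  refine ⟨⟨Sh X, Sh (-X), ?_, ?_⟩, ?_⟩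
  · ext1 x; apply WithLp.ofLp_injective; simp [Sh]; rfl
  · ext1 x; apply WithLp.ofLp_injective; simp [Sh]; rfl
  · ext1 x; apply WithLp.ofLp_injective; simp [Sh, Dg, blockT, blockT2]

lemma wh_block {T0 T1 : Hl →L[ℂ] Hl} (X : Hl →L[ℂ] Hl) {e f : Hl} (h0 : BS T0 e) (h1 : BS T1 f) :
    WeaklyHomogeneousOp (blockT T0 T1 X) := by
  have sim := blockT_similar T0 T1 X
  constructor
  · intro z hz
    rw [mem_closedBall_zero_iff]
    by_contra hlt
    push Not at hlt
    apply hz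
    have hz0 : z ≠ 0 := by rintro rfl; simp at hlt; linarith
    have hzi : ‖z⁻¹‖ < 1 := by rw [norm_inv]; exact inv_lt_one_of_one_lt₀ hlt
    obtain ⟨hu, _⟩ := Dg_inverse (isUnit_one_sub_smul h0.1 hzi) (isUnit_one_sub_smul h1.1 hzi)
    obtain ⟨S, hS⟩ := sim
    rw [← Dg_sub, Dg_one, ← Dg_smul] at hu
    have e : (S : H2 →L[ℂ] H2) * (z • (1 - z⁻¹ • Dg T0 T1)) =
        (z • (1 : H2 →L[ℂ] H2) - blockT T0 T1 X) * S := by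
      rw [smul_sub, smul_smul, mul_inv_cancel₀ hz0, one_smul, mul_sub, hS, sub_mul]
      simp
    have hzu : IsUnit (z • (1 - z⁻¹ • Dg T0 T1)) := by
      have := hu.smul (Units.mk0 z hz0)
      exact this
    rw [spectrum.mem_resolventSet_iff, Algebra.algebraMap_eq_smul_one]
    have h3 : IsUnit ((z • (1 : H2 →L[ℂ] H2) - blockT T0 T1 X) * S) := e ▸ S.isUnit.mul hzu
    simpa using h3
  · intro θ a ha
    have ha' : ‖(starRingEnd ℂ) a‖ < 1 := by simpa using ha
    have hm : mobiusOp θ a (Dg T0 T1) = Dg (mobiusOp θ a T0) (mobiusOp θ a T1) := by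
      unfold mobiusOp
      rw [← Dg_one, Dg_smul, Dg_smul, Dg_sub, Dg_sub,
        (Dg_inverse (isUnit_one_sub_smul h0.1 ha') (isUnit_one_sub_smul h1.1 ha')).2, Dg_mul,
        Dg_smul]
    obtain ⟨k0, hk0⟩ := h0.mobius θ ha
    obtain ⟨k1, hk1⟩ := h1.mobius θ ha
    have s1 := (sim.symm'.mobius' θ a)
    rw [hm] at s1
    exact (s1.trans' (Dg_similar (hk0.similar h0) (hk1.similar h1))).trans' sim

/-- Theorem 4.11: `T(wₙ, vₙ, dₙ)` with unimodular weights is irreducible and weakly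
homogeneous. -/
theorem irreducible_weaklyHomogeneous_of_T_w_v_d
    (w v : ℤ → ℂ) (hw : ∀ n, ‖w n‖ = 1) (hv : ∀ n, ‖v n‖ = 1)
    (d : ℤ → ℂ) (hdb : ∃ C : ℝ, ∀ n, ‖d n‖ ≤ C)
    (T0 T1 X : Hl →L[ℂ] Hl)
    (hT0 : ∀ n : ℤ, T0 (eb n) = w n • eb (n + 1))
    (hT1 : ∀ n : ℤ, T1 (eb n) = v n • eb (n + 1))
    (hX : ∀ n : ℤ, X (eb n) = d n • eb n)
    (hXT : X.comp T1 ≠ T0.comp X)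
    (hg : ∃ g : ℤ ≃ ℤ, ∃ N : ℤ,
      (∀ m n : ℤ, N < m → N < n → sqSeq w v d m = sqSeq w v d n → m = n) ∧
      (∀ n : ℤ, sqSeq w v d n = sqSeq w v d (g n)))
    (hcond : ∀ n : ℤ,
      (¬ ∃ r : ℝ, d (n + 1) * cSeq' w v d n + d n * cSeq' w v d (n - 1) -
          d (n + 1) * starRingEnd ℂ (w n) * v n * cSeq' w v d (n - 1) = (r : ℂ)) ∨
      (starRingEnd ℂ (d (n + 1)) * w n * v n - starRingEnd ℂ (d n)) *
          ((sqSeq w v d (n - 1) : ℝ) : ℂ) ≠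
        (starRingEnd ℂ (d (n - 1)) * starRingEnd ℂ (w (n - 1)) * v (n - 1) -
            starRingEnd ℂ (d n)) * ((sqSeq w v d n : ℝ) : ℂ)) :
    IsIrreducibleOp (blockT T0 T1 X) ∧ WeaklyHomogeneousOp (blockT T0 T1 X) := by
  obtain ⟨_, N, hN, _⟩ := hg
  refine ⟨?_, wh_block X (BS_shift hw hT0) (BS_shift hv hT1)⟩
  exact irr_of_core hw hv (blockT_E0 hT0) (blockT_E1 hT0 hT1 hX) N hN
end
end
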